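/- For any integers m ≥ 0, n ≥ 1, any subset S of [m] = {1,2,…,m} with s = |S|, the sum over all complete (m+1)-ary trees T with n internal vertices of the product over all internal vertices v of T of (m − s + 1/ℍ_v^S) equals (m−s+1)^n · (mn+1)^{n−1} / n!. -/

import Mathlib

open Polynomial Finset

/-- A complete `m`-ary tree: a `leaf` is an external vertex and a `node`
has exactly `m` linearly ordered subtrees. -/
inductive MTree (m : ℕ) : Type
  | leaf : MTree m
  | node : (Fin m → MTree m) → MTree m

namespace MTree

/-- The number of internal vertices of a complete `m`-ary tree. -/
def internals {m : ℕ} : MTree m → ℕ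
  | leaf => 0
  | node c => 1 + ∑ i, (c i).internals

/-- The first kind of hook length of the root of `node c`: one plus the number of
internal vertices of all subtrees except the rightmost one. -/
def hook1 {m : ℕ} (c : Fin m → MTree m) : ℕ :=
  1 + ∑ i ∈ Finset.univ.filter (fun i : Fin m => (i : ℕ) + 1 < m), (c i).internals

/-- The product of `f (𝓗_v)` over all internal vertices `v` of a complete `m`-ary
tree, where `𝓗_v` is the first kind of hook length. -/
def hookProd1 {m : ℕ} {R : Type*} [CommSemiring R] (f : ℕ → R) : MTree m → R
  | leaf => 1
  | node c => f (hook1 c) * ∏ i, hookProd1 f (c i)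

/-- The number of internal vertices of the `(m+1-|S|)`-ary tree `T^S` obtained from a
complete `(m+1)`-ary tree `T` by recursively deleting, for every `r ∈ S ⊆ [m]`,
the `r`-th subtree of every remaining internal vertex (the label `r ∈ {1,…,m}`
corresponds to the child with index `r - 1`, i.e. to `Fin.castSucc` of `Fin m`). -/
def internalsS {m : ℕ} (S : Finset (Fin m)) : MTree (m + 1) → ℕ
  | leaf => 0
  | node c => 1 + ∑ i ∈ (S.image Fin.castSucc)ᶜ, internalsS S (c i)

/-- The product of `f (ℍ_v^S)` over all internal vertices `v` of a complete
`(m+1)`-ary tree, where `ℍ_v^S` is the second kind of hook length. -/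
def hookProdS {m : ℕ} {R : Type*} [CommSemiring R] (S : Finset (Fin m)) (f : ℕ → R) :
    MTree (m + 1) → R
  | leaf => 1
  | node c => f (internalsS S (node c)) * ∏ i, hookProdS S f (c i)

end MTree

namespace HookAux
noncomputable section

/-- Abel polynomials `X (X + k h)^(h-1) / h!`. -/
def abelP (k : ℚ) : ℕ → ℚ[X]
  | 0 => 1
  | h + 1 => C (((h + 1).factorial : ℚ)⁻¹) * X * (X + C (k * (h + 1))) ^ h

lemma abelP_eval_zero (k : ℚ) (h : ℕ) : (abelP k (h + 1)).eval 0 = 0 := by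
  simp [abelP]

lemma abelP_derivative (k : ℚ) (h : ℕ) :
    derivative (abelP k (h + 1)) = (abelP k h).comp (X + C k) := by
  cases h with
  | zero => simp [abelP]
  | succ h =>
    have h1 : ((h + 1 + 1).factorial : ℚ)⁻¹ * ((h + 2 : ℕ) : ℚ) = ((h + 1).factorial : ℚ)⁻¹ := by
      rw [Nat.factorial_succ (h + 1)]
      have : ((h + 1).factorial : ℚ) ≠ 0 := by positivity
      have : ((h : ℚ) + 2) ≠ 0 := by positivity
      push_cast
      field_simp
      ring
    simp only [abelP]
    rw [← h1]
    simp only [derivative_mul, derivative_C, derivative_X, derivative_pow, derivative_add,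
      mul_comp, C_comp, X_comp, pow_comp, add_comp, C_mul, C_add, map_natCast, C_1,
      derivative_natCast, derivative_one, natCast_comp, one_comp]
    push_cast
    ring

lemma eq_of_derivative {p q : ℚ[X]} (h : derivative p = derivative q)
    (h0 : p.eval 0 = q.eval 0) : p = q := by
  have h1 : derivative (p - q) = 0 := by simp [h]
  have h2 := derivative_eq_zero.mp h1
  rw [natDegree_eq_zero] at h2
  obtain ⟨x, hx⟩ := h2
  have h3 : (p - q).eval 0 = 0 := by simp [h0]
  rw [← hx] at h3
  simp at h3
  rw [h3] at hx
  simp at hx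
  exact (sub_eq_zero.mp hx.symm)

lemma abelP_conv (k s : ℚ) (n : ℕ) : ∀ q : ℚ,
    ∑ x ∈ antidiagonal n, abelP k x.1 * C ((abelP (k + s) x.2).eval (s * x.1 + q))
      = (abelP (k + s) n).comp (X + C q) := by
  induction n with
  | zero => intro q; simp [abelP]
  | succ n ih =>
    intro q
    rw [Finset.Nat.sum_antidiagonal_succ]
    apply eq_of_derivative
    · simp only [derivative_add, derivative_sum, derivative_mul, derivative_C, mul_zero, add_zero,
        abelP_derivative, derivative_comp]
      have := congrArg (fun p => p.comp (X + C k)) (ih (s + q))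
      simp only [Polynomial.sum_comp, mul_comp, C_comp] at this
      have e : ∀ x : ℕ, s * ((x + 1 : ℕ) : ℚ) + q = s * x + (s + q) := by
        intro x; push_cast; ring
      simp only [e, this]
      simp only [abelP, derivative_one, zero_mul, derivative_X, zero_add, add_zero, one_mul]
      rw [comp_assoc, comp_assoc]
      congr 1
      simp
      ring
    · simp only [eval_add, eval_finsetSum, eval_mul, abelP_eval_zero, zero_mul, sum_const_zero]
      simp [abelP]

/-- Abel values. -/
def ab (k : ℚ) (h : ℕ) (p : ℚ) : ℚ := (abelP k h).eval p

lemma ab_conv (k s : ℚ) (n : ℕ) (p q : ℚ) :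
    ∑ x ∈ antidiagonal n, ab k x.1 p * ab (k + s) x.2 (s * x.1 + q) = ab (k + s) n (p + q) := by
  have := congrArg (eval p) (abelP_conv k s n q)
  simpa [eval_finsetSum, ab] using this

lemma ab_conv' (k : ℚ) (n : ℕ) (p q : ℚ) :
    ∑ x ∈ antidiagonal n, ab k x.1 p * ab k x.2 q = ab k n (p + q) := by
  simpa using ab_conv k 0 n p q

lemma ab_zero (k : ℚ) (n : ℕ) : ab k n 0 = if n = 0 then 1 else 0 := by
  cases n <;> simp [ab, abelP]

/-- The polynomial coefficients. -/
def B (k s : ℚ) (p q : ℚ) (n : ℕ) : ℚ[X] :=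
  ∑ x ∈ antidiagonal n,
    monomial x.1 ((k + 1) ^ n * (ab k x.1 p * ab (k + s) x.2 (s * x.1 + q)))

lemma B_coeff (k s p q : ℚ) (h j : ℕ) : (B k s p q (h + j)).coeff h =
    (k + 1) ^ (h + j) * (ab k h p * ab (k + s) j (s * h + q)) := by
  unfold B
  rw [finsetSum_coeff, Finset.sum_eq_single (h, j)]
  · simp
  · rintro ⟨a, b⟩ hab hne
    simp only [HasAntidiagonal.mem_antidiagonal] at hab
    rw [coeff_monomial, if_neg]
    rintro rfl
    apply hne
    ext <;> simp; omega
  · simp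

lemma B_coeff_lt (k s p q : ℚ) (n h : ℕ) (hn : n < h) : (B k s p q n).coeff h = 0 := by
  unfold B
  rw [finsetSum_coeff]
  apply Finset.sum_eq_zero
  rintro ⟨a, b⟩ hab
  simp only [HasAntidiagonal.mem_antidiagonal] at hab
  rw [coeff_monomial, if_neg]
  simp only
  omega

lemma B_eval (k s p q : ℚ) (n : ℕ) :
    (B k s p q n).eval 1 = (k + 1) ^ n * ab (k + s) n (p + q) := by
  rw [← ab_conv, Finset.mul_sum]
  simp [B, eval_finsetSum]

lemma B_zero (k s q : ℚ) (n : ℕ) :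
    B k s 0 q n = C ((k + 1) ^ n * ab (k + s) n q) := by
  unfold B
  rw [Finset.sum_eq_single (0, n)]
  · simp [ab_zero]
  · rintro ⟨a, b⟩ hab hne
    simp only [HasAntidiagonal.mem_antidiagonal] at hab
    have : a ≠ 0 := by
      rintro rfl
      apply hne
      ext <;> simp; omega
    simp [ab_zero, this]
  · simp

/-- The generating series. -/
def Phi (k s p q : ℚ) : PowerSeries ℚ[X] := PowerSeries.mk (B k s p q)

lemma quad {M : Type*} [AddCommMonoid M] (n : ℕ) (f : ℕ → ℕ → ℕ → ℕ → M) :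
    ∑ x ∈ antidiagonal n, ∑ y ∈ antidiagonal x.1, ∑ z ∈ antidiagonal x.2, f y.1 y.2 z.1 z.2
    = ∑ x ∈ antidiagonal n, ∑ y ∈ antidiagonal x.1, ∑ z ∈ antidiagonal x.2,
      f y.1 z.1 y.2 z.2 := by
  simp only [← Finset.sum_product']
  simp only [Finset.sum_sigma']
  refine Finset.sum_nbij'
    (fun x => ⟨(x.2.1.1 + x.2.2.1, x.2.1.2 + x.2.2.2),
      ((x.2.1.1, x.2.2.1), (x.2.1.2, x.2.2.2))⟩)
    (fun x => ⟨(x.2.1.1 + x.2.2.1, x.2.1.2 + x.2.2.2),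
      ((x.2.1.1, x.2.2.1), (x.2.1.2, x.2.2.2))⟩) ?_ ?_ ?_ ?_ ?_
  · rintro ⟨⟨a, b⟩, ⟨⟨c, d⟩, ⟨e, g⟩⟩⟩ h
    simp at h ⊢
    omega
  · rintro ⟨⟨a, b⟩, ⟨⟨c, d⟩, ⟨e, g⟩⟩⟩ h
    simp at h ⊢
    omega
  · rintro ⟨⟨a, b⟩, ⟨⟨c, d⟩, ⟨e, g⟩⟩⟩ h
    simp at h ⊢
    omega
  · rintro ⟨⟨a, b⟩, ⟨⟨c, d⟩, ⟨e, g⟩⟩⟩ h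
    simp at h ⊢
    omega
  · rintro ⟨⟨a, b⟩, ⟨⟨c, d⟩, ⟨e, g⟩⟩⟩ h
    rfl

lemma Phi_mul (k s p q p' q' : ℚ) :
    Phi k s p q * Phi k s p' q' = Phi k s (p + p') (q + q') := by
  ext1 n
  rw [PowerSeries.coeff_mul]
  simp only [Phi, PowerSeries.coeff_mk]
  have h1 : ∀ x ∈ antidiagonal n, B k s p q x.1 * B k s p' q' x.2 =
      ∑ y ∈ antidiagonal x.1, ∑ z ∈ antidiagonal x.2,
        monomial (y.1 + z.1) ((k + 1) ^ n * ((ab k y.1 p * ab (k + s) y.2 (s * y.1 + q)) *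
          (ab k z.1 p' * ab (k + s) z.2 (s * z.1 + q')))) := by
    intro x hx
    rw [HasAntidiagonal.mem_antidiagonal] at hx
    unfold B
    rw [Finset.sum_mul_sum]
    refine Finset.sum_congr rfl fun y _ => Finset.sum_congr rfl fun z _ => ?_
    rw [monomial_mul_monomial, ← hx, pow_add]
    congr 1
    ring
  rw [Finset.sum_congr rfl h1]
  rw [quad n (fun a b c d => monomial (a + c) ((k + 1) ^ n * ((ab k a p *
    ab (k + s) b (s * a + q)) * (ab k c p' * ab (k + s) d (s * c + q')))))]
  unfold B
  refine Finset.sum_congr rfl fun x _ => ?_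
  rw [← ab_conv' k x.1 p p', Finset.sum_mul, Finset.mul_sum, map_sum]
  refine Finset.sum_congr rfl fun y hy => ?_
  rw [HasAntidiagonal.mem_antidiagonal] at hy
  have : s * (x.1 : ℚ) + (q + q') = (s * y.1 + q) + (s * y.2 + q') := by
    rw [← hy]; push_cast; ring
  rw [this, ← ab_conv', Finset.mul_sum, Finset.mul_sum, map_sum]
  refine Finset.sum_congr rfl fun z hz => ?_
  rw [hy]
  congr 1
  ring

lemma Phi_zero (k s : ℚ) : Phi k s 0 0 = 1 := by
  ext1 n
  simp only [Phi, PowerSeries.coeff_mk, B_zero, ab_zero, PowerSeries.coeff_one]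
  split_ifs with h <;> simp [h]

lemma Phi_prod {ι : Type*} (t : Finset ι) (k s : ℚ) (p q : ι → ℚ) :
    ∏ i ∈ t, Phi k s (p i) (q i) = Phi k s (∑ i ∈ t, p i) (∑ i ∈ t, q i) := by
  classical
  induction t using Finset.induction_on with
  | empty => simp [Phi_zero]
  | insert a t ha ih => rw [Finset.prod_insert ha, ih, Phi_mul, sum_insert ha, sum_insert ha]

lemma ab_step (k : ℚ) (h : ℕ) :
    (k + 1) * ab k (h + 1) 1 = (k + ((h + 1 : ℕ) : ℚ)⁻¹) * ab k h (k + 1) := by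
  cases h with
  | zero => simp [ab, abelP]
  | succ h =>
    simp [ab, abelP]
    rw [Nat.factorial_succ (h + 1)]
    have : ((h + 1).factorial : ℚ) ≠ 0 := by positivity
    have : ((h : ℚ) + 1 + 1) ≠ 0 := by positivity
    push_cast
    field_simp
    ring

/-- The key recursion. -/
lemma B_step (k s : ℚ) (n h : ℕ) : (B k s 1 0 (n + 1)).coeff h =
    (k + (h : ℚ)⁻¹) * (X * B k s (k + 1) s n).coeff h := by
  cases h with
  | zero =>
    have := B_coeff k s 1 0 0 (n + 1)
    rw [zero_add] at this
    rw [this]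
    simp [ab_zero]
  | succ h =>
    rw [coeff_X_mul]
    rcases Nat.lt_or_ge n h with hlt | hge
    · rw [B_coeff_lt _ _ _ _ _ _ hlt, B_coeff_lt _ _ _ _ _ _ (by omega)]; simp
    · obtain ⟨j, rfl⟩ := Nat.exists_eq_add_of_le hge
      rw [B_coeff, show h + j + 1 = h + 1 + j by ring, B_coeff]
      have e : s * ((h + 1 : ℕ) : ℚ) + 0 = s * h + s := by push_cast; ring
      rw [e]
      linear_combination (k + 1) ^ (h + j) * ab (k + s) j (s * h + s) * ab_step k h

open MTree in
lemma finite_le (r n : ℕ) : {T : MTree r | T.internals ≤ n}.Finite := by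
  induction n with
  | zero =>
    refine (Set.finite_singleton (leaf : MTree r)).subset ?_
    intro T hT
    cases T with
    | leaf => simp
    | node c => simp [internals] at hT
  | succ n ih =>
    have h2 := (Set.Finite.pi' (fun _ : Fin r => ih)).image node
    refine ((Set.finite_singleton (leaf : MTree r)).union h2).subset ?_
    intro T hT
    cases T with
    | leaf => simp
    | node c =>
      right
      refine ⟨c, ?_, rfl⟩
      intro i
      simp only [Set.mem_ofPred_eq, internals] at hT ⊢
      have := Finset.single_le_sum (f := fun i => (c i).internals) (fun _ _ => Nat.zero_le _)
        (Finset.mem_univ i)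
      omega

lemma finite_eq (r n : ℕ) : {T : MTree r | T.internals = n}.Finite :=
  (finite_le r n).subset (fun _ h => le_of_eq h)

/-- Trees with `n` internal vertices. -/
def trees (r n : ℕ) : Finset (MTree r) := (finite_eq r n).toFinset

lemma mem_trees {r n : ℕ} {T : MTree r} : T ∈ trees r n ↔ T.internals = n := by
  simp [trees]

lemma trees_zero (r : ℕ) : trees r 0 = {MTree.leaf} := by
  ext T
  rw [mem_trees]
  cases T <;> simp [MTree.internals]

lemma sum_trees_succ {M : Type*} [AddCommMonoid M] (r n : ℕ) (f : MTree r → M) :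
    ∑ T ∈ trees r (n + 1), f T =
      ∑ l ∈ Finset.finsuppAntidiag (Finset.univ : Finset (Fin r)) n,
        ∑ c ∈ Fintype.piFinset (fun i => trees r (l i)), f (MTree.node c) := by
  classical
  rw [Finset.sum_sigma']
  symm
  refine Finset.sum_bij (fun x _ => MTree.node x.2) ?_ ?_ ?_ ?_
  · rintro ⟨l, c⟩ h
    simp only [Finset.mem_sigma, Finset.mem_finsuppAntidiag, Fintype.mem_piFinset, mem_trees] at h ⊢
    simp only [MTree.internals, h.2, h.1.1]
    omega
  · rintro ⟨l, c⟩ h ⟨l', c'⟩ h' e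
    simp only [Finset.mem_sigma, Finset.mem_finsuppAntidiag, Fintype.mem_piFinset, mem_trees] at h h'
    simp only [MTree.node.injEq] at e
    subst e
    have : l = l' := by
      ext i
      rw [← h.2 i, ← h'.2 i]
    subst this
    rfl
  · intro T hT
    rw [mem_trees] at hT
    cases T with
    | leaf => simp [MTree.internals] at hT
    | node c =>
      refine ⟨⟨Finsupp.equivFunOnFinite.symm (fun i => (c i).internals), c⟩, ?_, rfl⟩
      simp only [MTree.internals] at hT
      simp [Finset.mem_finsuppAntidiag, mem_trees]
      omega
  · intros; rfl

variable {m : ℕ}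

/-- Bivariate weight of a tree. -/
def wt (S : Finset (Fin m)) (f : ℕ → ℚ) (T : MTree (m + 1)) : ℚ[X] :=
  monomial (T.internalsS S) (T.hookProdS S f)

/-- Weight of a child at slot `i`. -/
def slot (S : Finset (Fin m)) (f : ℕ → ℚ) (i : Fin (m + 1)) (T : MTree (m + 1)) : ℚ[X] :=
  if i ∈ (S.image Fin.castSucc)ᶜ then wt S f T else C (T.hookProdS S f)

lemma prod_monomial {ι : Type*} (t : Finset ι) (e : ι → ℕ) (a : ι → ℚ) :
    ∏ i ∈ t, monomial (e i) (a i) = monomial (∑ i ∈ t, e i) (∏ i ∈ t, a i) := by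
  classical
  induction t using Finset.induction_on with
  | empty => simp
  | insert a t ha ih =>
    rw [prod_insert ha, ih, sum_insert ha, prod_insert ha, monomial_mul_monomial]

lemma wt_node (S : Finset (Fin m)) (f : ℕ → ℚ) (c : Fin (m + 1) → MTree (m + 1)) (h : ℕ) :
    (wt S f (MTree.node c)).coeff h = f h * (X * ∏ i, slot S f i (c i)).coeff h := by
  have h1 : ∏ i, slot S f i (c i) =
      monomial (∑ i ∈ (S.image Fin.castSucc)ᶜ, (c i).internalsS S)
        (∏ i, (c i).hookProdS S f) := by
    have : ∀ i, slot S f i (c i) = monomial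
        (if i ∈ (S.image Fin.castSucc)ᶜ then (c i).internalsS S else 0)
        ((c i).hookProdS S f) := by
      intro i
      unfold slot wt
      split_ifs <;> rfl
    simp only [this]
    rw [prod_monomial]
    rw [Finset.sum_ite_mem, Finset.univ_inter]
  rw [h1, X_mul_monomial, wt]
  have h3 : (MTree.node c).internalsS S =
      ∑ i ∈ (S.image Fin.castSucc)ᶜ, (c i).internalsS S + 1 := by
    rw [MTree.internalsS, add_comm]
  rw [MTree.hookProdS, h3, coeff_monomial, coeff_monomial]
  split_ifs with h2
  · rw [h2]
  · simp

lemma main (S : Finset (Fin m)) (k s : ℚ) (hs : s = S.card) (hk : k + s = m) (n : ℕ) :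
    ∑ T ∈ trees (m + 1) n, wt S (fun h => k + (h : ℚ)⁻¹) T = B k s 1 0 n := by
  set f : ℕ → ℚ := fun h => k + (h : ℚ)⁻¹ with hf
  induction n using Nat.strong_induction_on with
  | _ n ih =>
  cases n with
  | zero =>
    rw [trees_zero]
    simp [wt, MTree.internalsS, MTree.hookProdS, B, ab, abelP]
  | succ n =>
    ext h
    rw [B_step, sum_trees_succ, finsetSum_coeff]
    simp only [finsetSum_coeff, wt_node]
    simp only [← Finset.mul_sum, ← finsetSum_coeff]
    congr 3
    set p : Fin (m + 1) → ℚ := fun i => if i ∈ (S.image Fin.castSucc)ᶜ then 1 else 0 with hp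
    set q : Fin (m + 1) → ℚ := fun i => if i ∈ (S.image Fin.castSucc)ᶜ then 0 else 1 with hq
    have hcard : (S.image Fin.castSucc).card = S.card :=
      Finset.card_image_of_injective _ (Fin.castSucc_injective m)
    have hsq : ∑ i, q i = s := by
      have : ∀ i, q i = if i ∈ S.image Fin.castSucc then 1 else 0 := by
        intro i; simp only [hq, Finset.mem_compl]; split_ifs <;> simp_all
      simp only [this, Finset.sum_ite_mem, Finset.univ_inter, Finset.sum_const, hcard]
      simp [hs]
    have hsp : ∑ i, p i = k + 1 := by
      have : ∑ i, p i + ∑ i, q i = m + 1 := by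
        rw [← Finset.sum_add_distrib]
        have : ∀ i, p i + q i = 1 := by
          intro i; simp only [hp, hq]; split_ifs <;> simp
        simp [this]
      rw [hsq, ← hk] at this
      linarith
    have key : B k s (k + 1) s n = PowerSeries.coeff n (∏ i, Phi k s (p i) (q i)) := by
      rw [Phi_prod, hsq, hsp, Phi, PowerSeries.coeff_mk]
    rw [key, PowerSeries.coeff_prod]
    refine Finset.sum_congr rfl fun l hl => ?_
    rw [← Finset.prod_univ_sum]
    refine Finset.prod_congr rfl fun i _ => ?_
    have hli : l i < n + 1 := by
      rw [Finset.mem_finsuppAntidiag] at hl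
      have hl1 : ∑ i, l i = n := hl.1
      have := Finset.single_le_sum (f := fun i => l i) (fun _ _ => Nat.zero_le _)
        (Finset.mem_univ i)
      omega
    have hi := ih (l i) hli
    rw [Phi, PowerSeries.coeff_mk]
    simp only [slot, hp, hq]
    split_ifs with hmem
    · exact hi
    · rw [B_zero, ← map_sum]
      have := congrArg (eval 1) hi
      rw [B_eval] at this
      simp only [wt, eval_finsetSum, eval_monomial, one_pow, mul_one, add_zero] at this
      rw [this]

end
end HookAux

/-- **Corollary (x = m-s in Theorem 1.2).**  For `m ≥ 0`, `n ≥ 1` and `S ⊆ [m]`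
with `s = |S|`,
`∑_{T ∈ 𝒯_{n,m+1}} ∏_{v ∈ 𝓘(T)} (m - s + 1/ℍ_v^S)
  = (m-s+1)^n (mn+1)^{n-1} / n!`. -/
theorem hook_length_second_kind_corollary₂ (m n : ℕ) (hn : 1 ≤ n)
    (S : Finset (Fin m)) :
    (∑ᶠ T ∈ {T : MTree (m + 1) | T.internals = n},
        MTree.hookProdS S (fun h =>
          (m : ℚ) - (S.card : ℚ) + ((h : ℚ))⁻¹) T)
      = ((m : ℚ) - (S.card : ℚ) + 1) ^ n * ((m : ℚ) * n + 1) ^ (n - 1) /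
          (n.factorial : ℚ) := by
  have hfin := HookAux.main S ((m : ℚ) - S.card) S.card rfl (by ring) n
  have h1 := congrArg (eval 1) hfin
  rw [HookAux.B_eval] at h1
  simp only [HookAux.wt, eval_finsetSum, eval_monomial, one_pow, mul_one, add_zero,
    sub_add_cancel] at h1
  rw [finsum_mem_eq_finite_toFinset_sum _ (HookAux.finite_eq (m + 1) n)]
  refine Eq.trans h1 ?_
  obtain ⟨n, rfl⟩ := Nat.exists_eq_add_of_le' hn
  simp [HookAux.ab, HookAux.abelP]
  field_simp
  ring
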